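/- Let n be a positive integer of the form n = p₁^{a₁} p₂^{a₂} ⋯ p_k^{a_k} where p₁ < p₂ < ⋯ < p_k are primes with p₁ ≥ 3, and where all exponents a_i are even except for exactly one index j for which a_j is odd. Then H(n)/h(n) ≤ (p_j²/(p_j² − 1)) · ∏_{1 ≤ i ≤ k, i ≠ j} p_i³/(p_i³ − 1). -/

import Mathlib

open Real Finset

/-- `H n = ∏_{p ∣ n} p/(p-1)` over the distinct prime divisors of `n`. -/
noncomputable def H (n : ℕ) : ℝ := ∏ p ∈ n.primeFactors, (p : ℝ) / ((p : ℝ) - 1)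

/-- `h n = σ(n)/n`, the abundancy index of `n`. -/
noncomputable def habund (n : ℕ) : ℝ := (ArithmeticFunction.sigma 1 n : ℝ) / n

/-!
Both `H` and `h` are products over the primes `p ∣ n`. If `p` has exponent `a` in `n`, summing the
geometric series in `h` shows that `p` contributes exactly `p ^ (a + 1) / (p ^ (a + 1) - 1)` to
`H n / h n`. As `x / (x - 1)` decreases for `x > 1`, this factor is at most `p ^ b / (p ^ b - 1)`
for every `1 ≤ b ≤ a + 1`. An even positive exponent is at least `2`, which permits `b = 3`, while
the exponent of `j` is at least `1`, which permits `b = 2`.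
-/

lemma antitoneOn_div_sub_one {K : Type*} [Field K] [LinearOrder K] [IsStrictOrderedRing K] :
    AntitoneOn (fun x : K ↦ x / (x - 1)) (Set.Ioi 1) := by
  intro x hx y hy hxy
  rw [Set.mem_Ioi, ← sub_pos] at hx hy
  change y / (y - 1) ≤ x / (x - 1)
  rw [div_le_div_iff₀ hy hx]
  linarith

lemma div_sub_one_div_geom_sum_div_pow {K : Type*} [Field K] {x : K} (hx : x ≠ 1) (a : ℕ) :
    x / (x - 1) / ((∑ i ∈ range (a + 1), x ^ i) / x ^ a) = x ^ (a + 1) / (x ^ (a + 1) - 1) := by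
  have hx_sub : x - 1 ≠ 0 := sub_ne_zero.mpr hx
  rw [geom_sum_eq hx, pow_succ']
  field_simp

lemma one_lt_cast_of_mem_primeFactors {n p : ℕ} (hp : p ∈ n.primeFactors) : (1 : ℝ) < p :=
  mod_cast (Nat.prime_of_mem_primeFactors hp).one_lt

lemma one_le_factorization_of_mem_primeFactors {n p : ℕ} (hp : p ∈ n.primeFactors) :
    1 ≤ n.factorization p :=
  Nat.one_le_iff_ne_zero.mpr (Finsupp.mem_support_iff.mp hp)

lemma habund_eq_prod_primeFactors {n : ℕ} (hn : n ≠ 0) :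
    habund n = ∏ p ∈ n.primeFactors,
      (∑ i ∈ range (n.factorization p + 1), (p : ℝ) ^ i) / (p : ℝ) ^ n.factorization p := by
  have cast_eq_prod : (n : ℝ) = ∏ p ∈ n.primeFactors, (p : ℝ) ^ n.factorization p :=
    mod_cast (Nat.prod_factorization_pow_eq_self hn).symm
  rw [prod_div_distrib, ← cast_eq_prod, habund,
    ArithmeticFunction.sigma_eq_prod_primeFactors_sum_range_factorization_pow_mul hn]
  simp only [mul_one, Nat.cast_prod, Nat.cast_sum, Nat.cast_pow]

lemma H_div_habund_eq_prod_primeFactors {n : ℕ} (hn : n ≠ 0) :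
    H n / habund n = ∏ p ∈ n.primeFactors,
      (p : ℝ) ^ (n.factorization p + 1) / ((p : ℝ) ^ (n.factorization p + 1) - 1) := by
  rw [H, habund_eq_prod_primeFactors hn, ← prod_div_distrib]
  exact prod_congr rfl fun p hp ↦
    div_sub_one_div_geom_sum_div_pow (one_lt_cast_of_mem_primeFactors hp).ne' _

lemma H_div_habund_le_prod_primeFactors {n : ℕ} (hn : n ≠ 0) {b : ℕ → ℕ}
    (b_ne_zero : ∀ p ∈ n.primeFactors, b p ≠ 0)
    (b_le : ∀ p ∈ n.primeFactors, b p ≤ n.factorization p + 1) :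
    H n / habund n ≤ ∏ p ∈ n.primeFactors, (p : ℝ) ^ b p / ((p : ℝ) ^ b p - 1) := by
  rw [H_div_habund_eq_prod_primeFactors hn]
  refine prod_le_prod (fun p hp ↦ ?_) fun p hp ↦ ?_
  all_goals have one_lt_p := one_lt_cast_of_mem_primeFactors hp
  · exact div_nonneg (by positivity) (sub_nonneg.mpr (one_le_pow₀ one_lt_p.le))
  · exact antitoneOn_div_sub_one (one_lt_pow₀ one_lt_p (b_ne_zero p hp))
      (one_lt_pow₀ one_lt_p (Nat.succ_ne_zero _)) (pow_le_pow_right₀ one_lt_p.le (b_le p hp))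

theorem stmt_12_general (n j : ℕ) (hj : j ∈ n.primeFactors)
    (heven : ∀ p ∈ n.primeFactors, p ≠ j → Even (n.factorization p)) :
    H n / habund n ≤ ((j : ℝ) ^ 2 / ((j : ℝ) ^ 2 - 1)) *
      ∏ p ∈ n.primeFactors.erase j, (p : ℝ) ^ 3 / ((p : ℝ) ^ 3 - 1) := by
  let b : ℕ → ℕ := fun p ↦ if p = j then 2 else 3
  have b_ne_zero : ∀ p ∈ n.primeFactors, b p ≠ 0 := by grind
  have b_le : ∀ p ∈ n.primeFactors, b p ≤ n.factorization p + 1 := by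
    intro p hp
    have one_le := one_le_factorization_of_mem_primeFactors hp
    by_cases hpj : p = j
    · simpa only [b, if_pos hpj] using Nat.succ_le_succ one_le
    · have two_le : 2 ≤ n.factorization p := Nat.le_of_dvd one_le (heven p hp hpj).two_dvd
      simpa only [b, if_neg hpj] using Nat.succ_le_succ two_le
  calc H n / habund n
    _ ≤ ∏ p ∈ n.primeFactors, (p : ℝ) ^ b p / ((p : ℝ) ^ b p - 1) :=
      H_div_habund_le_prod_primeFactors (Nat.mem_primeFactors.mp hj).2.2 b_ne_zero b_le
    _ = (j : ℝ) ^ b j / ((j : ℝ) ^ b j - 1) *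
        ∏ p ∈ n.primeFactors.erase j, (p : ℝ) ^ b p / ((p : ℝ) ^ b p - 1) :=
      (mul_prod_erase _ _ hj).symm
    _ = _ := by
      congr 1
      · simp only [b, if_true]
      · exact prod_congr rfl fun p hp ↦ by simp only [b, if_neg (ne_of_mem_erase hp)]

theorem stmt_12 (n : ℕ) (hn : 0 < n) (hp1 : 3 ≤ n.minFac)
    (j : ℕ) (hj : j ∈ n.primeFactors) (hjodd : Odd (n.factorization j))
    (heven : ∀ p ∈ n.primeFactors, p ≠ j → Even (n.factorization p)) :
    H n / habund n ≤ ((j : ℝ) ^ 2 / ((j : ℝ) ^ 2 - 1)) *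
      ∏ p ∈ n.primeFactors.erase j, (p : ℝ) ^ 3 / ((p : ℝ) ^ 3 - 1) :=
  stmt_12_general n j hj heven
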